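/- arXiv:2101.04634 — 3 statements merged into one kernel-verified Lean document; each statement's English description precedes it below -/
import Mathlib

section
/- There exists a universal constant C > 0 such that for all integers ℓ ≥ 1 and k ≥ 1, with D = 2^ℓ, and for all D×D complex unitary matrices Y and V, the two probability distributions on ({1,...,D})^k defined by P_k(x_1,...,x_k) = ∏_{i=1}^k ∫_{U(D)} |(Y U V)_{x_i,0}|² dU and Q_k(x_1,...,x_k) = ∫_{U(D)} ∏_{i=1}^k |(Y U V)_{x_i,0}|² dU satisfy the total-variation bound ∑_{x ∈ ({1,...,D})^k} |P_k(x) − Q_k(x)| ≤ C · k² · 2^{−ℓ/4}. -/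
open MeasureTheory Matrix

noncomputable instance {m n : Type*} : MeasurableSpace (Matrix m n ℂ) :=
  inferInstanceAs (MeasurableSpace (m → n → ℂ))

/-!
A column of `Y U V` with `U` Haar-distributed is a uniformly random unit vector `w` of `ℂ^D`, and
the outcome probabilities are `p a = |w a|²`. On tuples `x` without repetition both `P_k` and `Q_k`
are constant, since permutation matrices are unitary; as both have total mass one, their distance
is at most twice the larger of the two probabilities of a collision. By the union bound over pairs
these are at most `(k choose 2) ∑ a, (E p a)²` and `(k choose 2) ∑ a, E (p a)²`, both of order
`k² / D`: unitary invariance forces `E (p a)² = 2 E (p a * p b)` for `a ≠ b`, hence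
`E (p a)² = 2 / (D (D + 1))`.
-/

open ProbabilityTheory

theorem sum_abs_sub_le_of_sub_const_on {X : Type*} [Fintype X] [DecidableEq X] {P Q : X → ℝ}
    (hP : ∀ x, 0 ≤ P x) (hQ : ∀ x, 0 ≤ Q x) (hPQ : ∑ x, P x = ∑ x, Q x) {N : Finset X}
    (hN : ∀ x ∈ N, ∀ y ∈ N, P x - Q x = P y - Q y) :
    ∑ x, |P x - Q x| ≤ 2 * max (∑ x ∈ Nᶜ, P x) (∑ x ∈ Nᶜ, Q x) := by
  have hon : ∑ x ∈ N, |P x - Q x| = |∑ x ∈ Nᶜ, P x - ∑ x ∈ Nᶜ, Q x| := calc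
    ∑ x ∈ N, |P x - Q x| = |∑ x ∈ N, (P x - Q x)| := by
      rcases N.eq_empty_or_nonempty with rfl | ⟨y, hy⟩
      · simp
      · rw [Finset.sum_congr rfl fun x hx => hN x hx y hy,
          Finset.sum_congr rfl fun x hx => congrArg abs (hN x hx y hy)]
        simp [abs_mul, ← mul_sub]
    _ = |∑ x ∈ Nᶜ, P x - ∑ x ∈ Nᶜ, Q x| := by
      rw [Finset.sum_sub_distrib, abs_sub_comm]
      congr 1
      linarith [Finset.sum_add_sum_compl N P, Finset.sum_add_sum_compl N Q]
  have hoff : ∑ x ∈ Nᶜ, |P x - Q x| ≤ ∑ x ∈ Nᶜ, P x + ∑ x ∈ Nᶜ, Q x := by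
    rw [← Finset.sum_add_distrib]
    exact Finset.sum_le_sum fun x _ =>
      (abs_sub _ _).trans_eq (by rw [abs_of_nonneg (hP x), abs_of_nonneg (hQ x)])
  rw [← Finset.sum_add_sum_compl N, hon]
  linarith [max_add_min (∑ x ∈ Nᶜ, P x) (∑ x ∈ Nᶜ, Q x),
    max_sub_min_eq_abs' (∑ x ∈ Nᶜ, P x) (∑ x ∈ Nᶜ, Q x)]

section Collision

variable {ι κ : Type*} [Fintype ι] [Fintype κ] [DecidableEq κ]

theorem sum_prod_eq_one {R : Type*} [CommSemiring R] {p : ι → R} (hp : ∑ a, p a = 1) :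
    ∑ x : κ → ι, ∏ l, p (x l) = 1 := by
  simp [← Fintype.prod_sum (f := fun _ : κ => p), hp]

variable [DecidableEq ι]

theorem sum_prod_filter_eq_const {R : Type*} [CommSemiring R] {p : ι → R} (hp : ∑ a, p a = 1)
    (s : Finset κ) (a : ι) :
    ∑ x : κ → ι with ∀ l ∈ s, x l = a, ∏ l, p (x l) = p a ^ s.card := by
  have hpi : ({x : κ → ι | ∀ l ∈ s, x l = a} : Finset (κ → ι))
      = Fintype.piFinset fun l => if l ∈ s then {a} else Finset.univ := by
    ext x
    simp only [Finset.mem_filter_univ, Fintype.mem_piFinset]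
    exact forall_congr' fun l => by split_ifs with hl <;> simp [hl]
  have hsum (l : κ) : ∑ b ∈ if l ∈ s then {a} else Finset.univ, p b = if l ∈ s then p a else 1 := by
    split_ifs <;> simp [hp]
  rw [hpi, ← Finset.prod_univ_sum]
  simp only [hsum, Fintype.prod_ite_mem, Finset.prod_const]

theorem sum_prod_filter_apply_eq_apply {R : Type*} [CommSemiring R] {p : ι → R}
    (hp : ∑ a, p a = 1) {i j : κ} (hij : i ≠ j) :
    ∑ x : κ → ι with x i = x j, ∏ l, p (x l) = ∑ a, p a ^ 2 := by
  rw [← Finset.sum_fiberwise _ fun x : κ → ι => x i]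
  refine Finset.sum_congr rfl fun a _ => ?_
  rw [← Finset.card_pair hij, ← sum_prod_filter_eq_const hp, Finset.filter_filter]
  congr 1
  ext x
  simp only [Finset.mem_filter_univ, Finset.mem_insert, Finset.mem_singleton, forall_eq_or_imp,
    forall_eq]
  grind

theorem sum_filter_not_injective_le {w : (κ → ι) → ℝ} (hw : ∀ x, 0 ≤ w x) :
    2 * ∑ x with ¬ Function.Injective x, w x
      ≤ ∑ q ∈ (Finset.univ : Finset κ).offDiag, ∑ x with x q.1 = x q.2, w x := by
  have hpairs (x : κ → ι) (hx : ¬ Function.Injective x) :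
      1 < (Finset.univ.offDiag.filter fun q : κ × κ => x q.1 = x q.2).card := by
    obtain ⟨i, j, hxij, hij⟩ := Function.not_injective_iff.1 hx
    exact Finset.one_lt_card.2 ⟨(i, j), by simp [hxij, hij], (j, i), by simp [hxij, hij.symm],
      by simp [hij]⟩
  simp_rw [Finset.sum_filter]
  rw [Finset.sum_comm, Finset.mul_sum]
  refine Finset.sum_le_sum fun x _ => ?_
  rw [← Finset.sum_filter, Finset.sum_const, nsmul_eq_mul]
  split_ifs with hx
  · simpa using mul_nonneg (Nat.cast_nonneg _) (hw x)
  · exact mul_le_mul_of_nonneg_right (by exact_mod_cast Nat.succ_le_of_lt (hpairs x hx)) (hw x)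

theorem sum_prod_filter_not_injective_le {p : ι → ℝ} (hp0 : ∀ a, 0 ≤ p a) (hp : ∑ a, p a = 1) :
    ∑ x : κ → ι with ¬ Function.Injective x, ∏ l, p (x l)
      ≤ (Fintype.card κ).choose 2 * ∑ a, p a ^ 2 := by
  have h := sum_filter_not_injective_le (w := fun x : κ → ι => ∏ l, p (x l))
    fun x => Finset.prod_nonneg fun l _ => hp0 (x l)
  rw [Finset.sum_congr rfl fun q hq =>
      sum_prod_filter_apply_eq_apply hp (Finset.mem_offDiag.1 hq).2.2,
    Finset.sum_const, nsmul_eq_mul, Finset.offDiag_card, Nat.cast_sub (Nat.le_mul_self _)] at h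
  rw [Nat.cast_choose_two]
  push_cast [Finset.card_univ] at h
  linarith

end Collision

section UnitaryMatrices

variable {ι : Type*} [Fintype ι] [DecidableEq ι]

theorem permMatrix_mem_unitaryGroup {R : Type*} [CommRing R] [StarRing R] (σ : Equiv.Perm ι) :
    σ.permMatrix R ∈ unitaryGroup ι R := by
  simp [mem_unitaryGroup_iff, star_eq_conjTranspose, ← permMatrix_mul]

theorem sum_norm_sq_col_eq_one {𝕜 : Type*} [RCLike 𝕜] {U : Matrix ι ι 𝕜}
    (hU : U ∈ unitaryGroup ι 𝕜) (j : ι) : ∑ a, ‖U a j‖ ^ 2 = 1 := by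
  have h := congrFun (congrFun (mem_unitaryGroup_iff'.1 hU) j) j
  simp only [mul_apply, star_apply, one_apply_eq, RCLike.star_def, RCLike.conj_mul] at h
  exact_mod_cast h

theorem exists_mem_unitaryGroup_row_eq {𝕜 : Type*} [RCLike 𝕜] {u : ι → 𝕜}
    (hu : ∑ a, ‖u a‖ ^ 2 = 1) (i : ι) : ∃ W ∈ unitaryGroup ι 𝕜, W i = u := by
  have hnorm : ‖WithLp.toLp 2 u‖ = 1 := by simp [EuclideanSpace.norm_eq, hu]
  obtain ⟨b, hb⟩ := Orthonormal.exists_orthonormalBasis_extension_of_card_eq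
    (𝕜 := 𝕜) (v := fun _ : ι => WithLp.toLp 2 u) (s := {i}) finrank_euclideanSpace
    ⟨fun _ => hnorm, fun a b hab => (hab (Subsingleton.elim a b)).elim⟩
  refine ⟨((EuclideanSpace.basisFun ι 𝕜).toBasis.toMatrix b)ᵀ, transpose_mem_unitaryGroup_iff.2
    (OrthonormalBasis.toMatrix_orthonormalBasis_mem_unitary _ _), ?_⟩
  ext a
  simp [Module.Basis.toMatrix_apply, hb i rfl]

end UnitaryMatrices

theorem sum_norm_add_I_pow_mul_pow_four (u v : ℂ) :
    ∑ m : Fin 4, ‖u + Complex.I ^ (m : ℕ) * v‖ ^ 4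
      = 4 * (‖u‖ ^ 4 + ‖v‖ ^ 4 + 4 * (‖u‖ ^ 2 * ‖v‖ ^ 2)) := by
  have hsq (z : ℂ) : ‖z‖ ^ 2 = z.re ^ 2 + z.im ^ 2 := by
    rw [Complex.sq_norm, Complex.normSq_apply]; ring
  have hfour (z : ℂ) : ‖z‖ ^ 4 = (z.re ^ 2 + z.im ^ 2) ^ 2 := by rw [← hsq]; ring
  simp only [hfour, Complex.add_re, Complex.mul_re, Complex.add_im, Complex.mul_im,
    Fin.sum_univ_four, Fin.isValue, Fin.coe_ofNat_eq_mod, Nat.zero_mod, pow_zero, Complex.one_re,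
    one_mul, Complex.one_im, zero_mul, sub_zero, add_zero, Nat.one_mod, pow_one, Complex.I_re,
    Complex.I_im, zero_sub, zero_add, Nat.reduceMod, Complex.I_sq, Complex.neg_re, neg_mul,
    Complex.neg_im, neg_zero, Nat.mod_succ, Complex.I_pow_three, sub_neg_eq_add, hsq]
  ring

/-- The random vector `w` is uniformly distributed on the unit sphere of `ι → ℂ` (a Haar-random
pure state). The uniform law is encoded by its invariance under the unitary group, which together
with the unit length characterises it. -/
structure IsHaarRandomState {Ω ι : Type*} [MeasurableSpace Ω] [Fintype ι] [DecidableEq ι]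
    (w : Ω → ι → ℂ) (μ : Measure Ω) : Prop where
  sum_norm_sq_eq_one : ∀ᵐ ω ∂μ, ∑ a, ‖w ω a‖ ^ 2 = 1
  identDistrib_mulVec : ∀ W ∈ unitaryGroup ι ℂ, IdentDistrib (fun ω => W *ᵥ w ω) w μ μ

namespace IsHaarRandomState

variable {Ω ι : Type*} [MeasurableSpace Ω] [Fintype ι] [DecidableEq ι] {μ : Measure Ω}
  {w : Ω → ι → ℂ}

theorem aemeasurable (hw : IsHaarRandomState w μ) : AEMeasurable w μ :=
  (hw.identDistrib_mulVec 1 (one_mem _)).aemeasurable_snd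

theorem nonempty [NeZero μ] (hw : IsHaarRandomState w μ) : Nonempty ι := by
  by_contra hempty
  have := not_nonempty_iff.1 hempty
  simpa [NeZero.ne μ] using hw.sum_norm_sq_eq_one

theorem identDistrib_dotProduct (hw : IsHaarRandomState w μ) {u : ι → ℂ}
    (hu : ∑ a, ‖u a‖ ^ 2 = 1) (i : ι) :
    IdentDistrib (fun ω => u ⬝ᵥ w ω) (fun ω => w ω i) μ μ := by
  obtain ⟨W, hW, rfl⟩ := exists_mem_unitaryGroup_row_eq hu i
  exact (hw.identDistrib_mulVec W hW).comp (measurable_pi_apply i)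

theorem identDistrib_apply (hw : IsHaarRandomState w μ) (i j : ι) :
    IdentDistrib (fun ω => w ω i) (fun ω => w ω j) μ μ := by
  simpa using hw.identDistrib_dotProduct (u := Pi.single i 1)
    (by simp [Pi.single_apply, apply_ite norm, ite_pow]) j

theorem identDistrib_mul_add_mul (hw : IsHaarRandomState w μ) {i j : ι} (hij : i ≠ j) {c d : ℂ}
    (hcd : ‖c‖ ^ 2 + ‖d‖ ^ 2 = 1) :
    IdentDistrib (fun ω => c * w ω i + d * w ω j) (fun ω => w ω i) μ μ := by
  have hunit : ∑ a, ‖(Pi.single i c + Pi.single j d : ι → ℂ) a‖ ^ 2 = 1 := by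
    rw [Fintype.sum_eq_add i j hij fun a ha => by simp [ha.1, ha.2]]
    simpa [hij, hij.symm] using hcd
  simpa only [add_dotProduct, single_dotProduct] using hw.identDistrib_dotProduct hunit i

theorem integral_prod_norm_sq_perm (hw : IsHaarRandomState w μ) {κ : Type*} [Fintype κ]
    (σ : Equiv.Perm ι) (x : κ → ι) :
    ∫ ω, ∏ l, ‖w ω (σ (x l))‖ ^ 2 ∂μ = ∫ ω, ∏ l, ‖w ω (x l)‖ ^ 2 ∂μ := by
  have hmeas : Measurable fun v : ι → ℂ => ∏ l, ‖v (x l)‖ ^ 2 := by fun_prop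
  simpa [Function.comp_def, permMatrix_mulVec] using
    ((hw.identDistrib_mulVec _ (permMatrix_mem_unitaryGroup σ)).comp hmeas).integral_eq

theorem integral_norm_add_mul_pow_four (hw : IsHaarRandomState w μ) {i j : ι} (hij : i ≠ j)
    {c : ℂ} (hc : ‖c‖ = 1) :
    ∫ ω, ‖w ω i + c * w ω j‖ ^ 4 ∂μ = 4 * ∫ ω, ‖w ω i‖ ^ 4 ∂μ := by
  have h := ((hw.identDistrib_mul_add_mul hij (c := (√2 : ℂ)⁻¹) (d := (√2 : ℂ)⁻¹ * c)
    (by norm_num [hc])).norm.pow (n := 4)).integral_eq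
  have hsqrt : (√2 : ℝ) ^ 4 = 4 := by
    rw [pow_mul √2 2 2, Real.sq_sqrt zero_le_two]
    norm_num
  simp only [mul_assoc, ← mul_add, norm_mul, mul_pow, norm_inv, inv_pow, Complex.norm_real,
    Real.norm_of_nonneg (Real.sqrt_nonneg 2), hsqrt, integral_const_mul] at h
  linarith

section FiniteMeasure

variable [IsFiniteMeasure μ]

theorem integrable_comp (hw : IsHaarRandomState w μ) {g : (ι → ℂ) → ℝ}
    (hg : Continuous g) : Integrable (fun ω => g (w ω)) μ := by
  have hcompact : IsCompact {v : ι → ℂ | ∑ a, ‖v a‖ ^ 2 = 1} := by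
    refine (isCompact_closedBall (0 : ι → ℂ) 1).of_isClosed_subset
      (isClosed_eq (by fun_prop) continuous_const) fun v hv => ?_
    rw [mem_closedBall_zero_iff, pi_norm_le_iff_of_nonneg zero_le_one]
    intro a
    rw [← sq_le_one_iff₀ (norm_nonneg _), ← Set.mem_ofPred_eq.mp hv]
    exact Finset.single_le_sum (f := fun a => ‖v a‖ ^ 2) (fun _ _ => sq_nonneg _)
      (Finset.mem_univ a)
  obtain ⟨B, hB⟩ := hcompact.exists_bound_of_continuousOn hg.continuousOn
  exact .of_bound (hg.measurable.comp_aemeasurable hw.aemeasurable).aestronglyMeasurable B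
    (hw.sum_norm_sq_eq_one.mono fun ω hω => hB _ hω)

theorem integrable_prod_norm_sq (hw : IsHaarRandomState w μ) {κ : Type*} [Fintype κ]
    (x : κ → ι) : Integrable (fun ω => ∏ l, ‖w ω (x l)‖ ^ 2) μ :=
  hw.integrable_comp (g := fun v => ∏ l, ‖v (x l)‖ ^ 2) (by fun_prop)

-- Averaging over the four phases `I ^ m` removes the cross terms of `‖w i + I ^ m * w j‖ ^ 4`.
theorem integral_norm_pow_four_eq_two_mul (hw : IsHaarRandomState w μ) {i j : ι} (hij : i ≠ j) :
    ∫ ω, ‖w ω i‖ ^ 4 ∂μ = 2 * ∫ ω, ‖w ω i‖ ^ 2 * ‖w ω j‖ ^ 2 ∂μ := by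
  have hrotate (m : Fin 4) :
      ∫ ω, ‖w ω i + Complex.I ^ (m : ℕ) * w ω j‖ ^ 4 ∂μ = 4 * ∫ ω, ‖w ω i‖ ^ 4 ∂μ :=
    hw.integral_norm_add_mul_pow_four hij (by simp)
  have hi := hw.integrable_comp (g := fun v => ‖v i‖ ^ 4) (by fun_prop)
  have hj := hw.integrable_comp (g := fun v => ‖v j‖ ^ 4) (by fun_prop)
  have hmixed := hw.integrable_comp (g := fun v => ‖v i‖ ^ 2 * ‖v j‖ ^ 2) (by fun_prop)
  have hsum : ∑ m : Fin 4, ∫ ω, ‖w ω i + Complex.I ^ (m : ℕ) * w ω j‖ ^ 4 ∂μ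
      = 4 * (∫ ω, ‖w ω i‖ ^ 4 ∂μ + ∫ ω, ‖w ω j‖ ^ 4 ∂μ
        + 4 * ∫ ω, ‖w ω i‖ ^ 2 * ‖w ω j‖ ^ 2 ∂μ) := by
    rw [← integral_finsetSum _ fun (m : Fin 4) _ => hw.integrable_comp
      (g := fun v => ‖v i + Complex.I ^ (m : ℕ) * v j‖ ^ 4) (by fun_prop)]
    simp_rw [sum_norm_add_I_pow_mul_pow_four]
    rw [integral_const_mul, integral_add (hi.fun_add hj) (hmixed.const_mul 4),
      integral_add hi hj, integral_const_mul]
  have hswap := ((hw.identDistrib_apply j i).norm.pow (n := 4)).integral_eq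
  simp only [hrotate, Finset.sum_const, Finset.card_univ, Fintype.card_fin, nsmul_eq_mul,
    Nat.cast_ofNat] at hsum
  linarith

end FiniteMeasure

variable [IsProbabilityMeasure μ]

theorem sum_integral_norm_sq_eq_one (hw : IsHaarRandomState w μ) :
    ∑ a, ∫ ω, ‖w ω a‖ ^ 2 ∂μ = 1 := by
  rw [← integral_finsetSum _ fun a _ =>
      hw.integrable_comp (g := fun v => ‖v a‖ ^ 2) (by fun_prop),
    integral_congr_ae hw.sum_norm_sq_eq_one]
  simp

theorem integral_norm_sq (hw : IsHaarRandomState w μ) (i : ι) :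
    ∫ ω, ‖w ω i‖ ^ 2 ∂μ = (Fintype.card ι : ℝ)⁻¹ := by
  refine eq_inv_of_mul_eq_one_right ?_
  calc Fintype.card ι * ∫ ω, ‖w ω i‖ ^ 2 ∂μ = ∑ a, ∫ ω, ‖w ω a‖ ^ 2 ∂μ := by
        simp [((hw.identDistrib_apply _ i).norm.pow (n := 2)).integral_eq]
    _ = 1 := hw.sum_integral_norm_sq_eq_one

theorem integral_norm_pow_four (hw : IsHaarRandomState w μ) (i : ι) :
    ∫ ω, ‖w ω i‖ ^ 4 ∂μ = 2 / (Fintype.card ι * (Fintype.card ι + 1)) := by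
  have hcard : (0 : ℝ) < Fintype.card ι := by exact_mod_cast Fintype.card_pos_iff.2 ⟨i⟩
  have hmarginal : ∑ j, ∫ ω, ‖w ω i‖ ^ 2 * ‖w ω j‖ ^ 2 ∂μ = (Fintype.card ι : ℝ)⁻¹ := by
    rw [← integral_finsetSum _ fun j _ =>
      hw.integrable_comp (g := fun v => ‖v i‖ ^ 2 * ‖v j‖ ^ 2) (by fun_prop),
      ← hw.integral_norm_sq i]
    refine integral_congr_ae (hw.sum_norm_sq_eq_one.mono fun ω hω => ?_)
    simp only [← Finset.mul_sum, hω, mul_one]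
  have hdiag : ∫ ω, ‖w ω i‖ ^ 2 * ‖w ω i‖ ^ 2 ∂μ = ∫ ω, ‖w ω i‖ ^ 4 ∂μ := by simp only [← pow_add]
  have hoff : ∑ j ∈ Finset.univ.erase i, ∫ ω, ‖w ω i‖ ^ 2 * ‖w ω j‖ ^ 2 ∂μ
      = (Fintype.card ι - 1) * (2⁻¹ * ∫ ω, ‖w ω i‖ ^ 4 ∂μ) := by
    rw [Finset.sum_congr rfl fun j hj => show _ = 2⁻¹ * ∫ ω, ‖w ω i‖ ^ 4 ∂μ by
      rw [hw.integral_norm_pow_four_eq_two_mul (Finset.ne_of_mem_erase hj).symm]; ring]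
    simp [Nat.cast_sub (Fintype.card_pos_iff.2 ⟨i⟩)]
  rw [← Finset.add_sum_erase _ _ (Finset.mem_univ i), hdiag, hoff] at hmarginal
  rw [eq_div_iff (by positivity)]
  field_simp at hmarginal
  linarith

theorem sum_integral_norm_pow_four (hw : IsHaarRandomState w μ) :
    ∑ a, ∫ ω, ‖w ω a‖ ^ 4 ∂μ = 2 / (Fintype.card ι + 1) := by
  have := hw.nonempty
  simp only [hw.integral_norm_pow_four, Finset.sum_const, Finset.card_univ, nsmul_eq_mul]
  field_simp

variable {κ : Type*} [Fintype κ] [DecidableEq κ]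

theorem sum_integral_prod_eq_one (hw : IsHaarRandomState w μ) :
    ∑ x : κ → ι, ∫ ω, ∏ l, ‖w ω (x l)‖ ^ 2 ∂μ = 1 := by
  rw [← integral_finsetSum _ fun x _ => hw.integrable_prod_norm_sq x,
    integral_congr_ae (hw.sum_norm_sq_eq_one.mono fun ω hω => sum_prod_eq_one hω)]
  simp

theorem sum_prod_integral_filter_not_injective_le (hw : IsHaarRandomState w μ) :
    ∑ x : κ → ι with ¬ Function.Injective x, ∏ l, ∫ ω, ‖w ω (x l)‖ ^ 2 ∂μ
      ≤ (Fintype.card κ).choose 2 * (2 / (Fintype.card ι + 1)) := by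
  refine (sum_prod_filter_not_injective_le
    (fun a => integral_nonneg fun ω => sq_nonneg ‖w ω a‖) hw.sum_integral_norm_sq_eq_one).trans ?_
  have := hw.nonempty
  have hcard : (1 : ℝ) ≤ Fintype.card ι := by exact_mod_cast Fintype.card_pos (α := ι)
  gcongr
  simp only [hw.integral_norm_sq, Finset.sum_const, Finset.card_univ, nsmul_eq_mul]
  field_simp
  linarith

theorem sum_integral_prod_filter_not_injective_le (hw : IsHaarRandomState w μ) :
    ∑ x : κ → ι with ¬ Function.Injective x, ∫ ω, ∏ l, ‖w ω (x l)‖ ^ 2 ∂μ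
      ≤ (Fintype.card κ).choose 2 * (2 / (Fintype.card ι + 1)) := by
  have hfour (a : ι) : Integrable (fun ω => ‖w ω a‖ ^ 4) μ :=
    hw.integrable_comp (g := fun v => ‖v a‖ ^ 4) (by fun_prop)
  calc ∑ x : κ → ι with ¬ Function.Injective x, ∫ ω, ∏ l, ‖w ω (x l)‖ ^ 2 ∂μ
      = ∫ ω, ∑ x : κ → ι with ¬ Function.Injective x, ∏ l, ‖w ω (x l)‖ ^ 2 ∂μ :=
        (integral_finsetSum _ fun x _ => hw.integrable_prod_norm_sq x).symm
    _ ≤ ∫ ω, (Fintype.card κ).choose 2 * ∑ a, ‖w ω a‖ ^ 4 ∂μ := by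
        refine integral_mono_ae (integrable_finsetSum _ fun x _ => hw.integrable_prod_norm_sq x)
          ((integrable_finsetSum _ fun a _ => hfour a).const_mul _)
          (hw.sum_norm_sq_eq_one.mono fun ω hω => ?_)
        simpa only [← pow_mul] using
          sum_prod_filter_not_injective_le (κ := κ) (fun a => sq_nonneg ‖w ω a‖) hω
    _ = (Fintype.card κ).choose 2 * (2 / (Fintype.card ι + 1)) := by
        rw [integral_const_mul, integral_finsetSum _ fun a _ => hfour a,
          hw.sum_integral_norm_pow_four]

theorem sum_abs_prod_integral_sub_integral_prod_le (hw : IsHaarRandomState w μ) :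
    ∑ x : κ → ι, |∏ l, ∫ ω, ‖w ω (x l)‖ ^ 2 ∂μ - ∫ ω, ∏ l, ‖w ω (x l)‖ ^ 2 ∂μ|
      ≤ (Fintype.card κ).choose 2 * (4 / (Fintype.card ι + 1)) := by
  have h := sum_abs_sub_le_of_sub_const_on
    (P := fun x : κ → ι => ∏ l, ∫ ω, ‖w ω (x l)‖ ^ 2 ∂μ)
    (Q := fun x => ∫ ω, ∏ l, ‖w ω (x l)‖ ^ 2 ∂μ) (N := {x | Function.Injective x})
    (fun x => Finset.prod_nonneg fun l _ => integral_nonneg fun ω => sq_nonneg _)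
    (fun x => integral_nonneg fun ω => Finset.prod_nonneg fun l _ => sq_nonneg _)
    ((sum_prod_eq_one hw.sum_integral_norm_sq_eq_one).trans hw.sum_integral_prod_eq_one.symm)
    fun x hx y hy => by
      obtain ⟨σ, hσ⟩ := Equiv.Perm.exists_extending_pair x y
        (Finset.mem_filter_univ _ |>.1 hx) (Finset.mem_filter_univ _ |>.1 hy)
      simp_rw [← hσ, hw.integral_norm_sq, hw.integral_prod_norm_sq_perm]
  rw [Finset.compl_filter] at h
  refine h.trans ((mul_le_mul_of_nonneg_left (max_le hw.sum_prod_integral_filter_not_injective_le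
    hw.sum_integral_prod_filter_not_injective_le) zero_le_two).trans_eq ?_)
  ring

end IsHaarRandomState

instance {m n : Type*} [Countable m] [Countable n] : BorelSpace (Matrix m n ℂ) :=
  inferInstanceAs (BorelSpace (m → n → ℂ))

theorem identDistrib_mul_left {G E : Type*} [MeasurableSpace G] [Mul G] [MeasurableMul G]
    [MeasurableSpace E] {μ : Measure G} [μ.IsMulLeftInvariant] {f : G → E} (hf : Measurable f)
    (g : G) : IdentDistrib (fun h => f (g * h)) f μ μ where
  aemeasurable_fst := (hf.comp (measurable_const_mul g)).aemeasurable
  aemeasurable_snd := hf.aemeasurable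
  map_eq := by
    rw [← Function.comp_def f, ← Measure.map_map hf (measurable_const_mul g), map_mul_left_eq_self]

theorem isHaarRandomState_mul_col {ι : Type*} [Fintype ι] [DecidableEq ι]
    (Y V : unitaryGroup ι ℂ) (j : ι) (μ : Measure (unitaryGroup ι ℂ)) [μ.IsMulLeftInvariant] :
    IsHaarRandomState (fun U a => (Y * U * V).1 a j) μ where
  sum_norm_sq_eq_one := .of_forall fun U => sum_norm_sq_col_eq_one (Y * U * V).2 j
  identDistrib_mulVec W hW := by
    have hcont : Continuous fun U : unitaryGroup ι ℂ => (Y * U * V).1 := by fun_prop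
    have hmeas : Measurable fun (U : unitaryGroup ι ℂ) (a : ι) => (Y * U * V).1 a j :=
      (continuous_pi fun a => hcont.matrix_elem a j).measurable
    have hconj (U : unitaryGroup ι ℂ) :
        Y * (Y⁻¹ * ⟨W, hW⟩ * Y * U) * V = ⟨W, hW⟩ * (Y * U * V) := by group
    have h := identDistrib_mul_left (μ := μ) hmeas (Y⁻¹ * ⟨W, hW⟩ * Y)
    simp only [hconj] at h
    exact h

theorem fixed_vs_fresh_unitary_tvd_parallel_general {ι κ : Type*} [Fintype ι] [DecidableEq ι]
    [Fintype κ] [DecidableEq κ] (Y V : unitaryGroup ι ℂ) (j : ι) (μ : Measure (unitaryGroup ι ℂ))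
    [μ.IsMulLeftInvariant] [IsProbabilityMeasure μ] :
    ∑ x : κ → ι, |∏ l, ∫ U, ‖(Y * U * V).1 (x l) j‖ ^ 2 ∂μ
        - ∫ U, ∏ l, ‖(Y * U * V).1 (x l) j‖ ^ 2 ∂μ|
      ≤ (Fintype.card κ).choose 2 * (4 / (Fintype.card ι + 1)) :=
  (isHaarRandomState_mul_col Y V j μ).sum_abs_prod_integral_sub_integral_prod_le

theorem choose_two_mul_four_div_le (ℓ k : ℕ) :
    k.choose 2 * (4 / ((2 : ℝ) ^ ℓ + 1)) ≤ 2 * (k : ℝ) ^ 2 * (2 : ℝ) ^ (-(ℓ : ℝ) / 4) := by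
  have hrate : 1 / ((2 : ℝ) ^ ℓ + 1) ≤ (2 : ℝ) ^ (-(ℓ : ℝ) / 4) := calc
    1 / ((2 : ℝ) ^ ℓ + 1) ≤ 1 / 2 ^ ℓ := by gcongr; linarith
    _ = (2 : ℝ) ^ (-(ℓ : ℝ)) := by simp [Real.rpow_neg]
    _ ≤ (2 : ℝ) ^ (-(ℓ : ℝ) / 4) :=
      Real.rpow_le_rpow_of_exponent_le one_le_two (by linarith [Nat.cast_nonneg (α := ℝ) ℓ])
  calc k.choose 2 * (4 / ((2 : ℝ) ^ ℓ + 1))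
      ≤ k ^ 2 / 2 * (4 * (2 : ℝ) ^ (-(ℓ : ℝ) / 4)) := by
        rw [← mul_one_div 4]
        gcongr
        simpa using Nat.choose_le_pow_div (α := ℝ) 2 k
    _ = 2 * (k : ℝ) ^ 2 * (2 : ℝ) ^ (-(ℓ : ℝ) / 4) := by ring

/-- There is a universal constant `C > 0` such that for all `ℓ, k ≥ 1`,
with `D = 2^ℓ`, for all `D×D` unitaries `Y, V` and the Haar probability measure `μ` on `U(D)`,
the total variation distance between `P_k` (product of individual Haar integrals) and
`Q_k` (Haar integral of the product) is at most `C · k² · 2^{−ℓ/4}`. -/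
theorem fixed_vs_fresh_unitary_tvd_parallel :
    ∃ C : ℝ, 0 < C ∧
      ∀ (ℓ k : ℕ), 1 ≤ ℓ → 1 ≤ k →
      ∀ (Y V : ↥(Matrix.unitaryGroup (Fin (2 ^ ℓ)) ℂ))
        (μ : Measure ↥(Matrix.unitaryGroup (Fin (2 ^ ℓ)) ℂ)),
        μ.IsHaarMeasure → IsProbabilityMeasure μ →
        ∑ x : Fin k → Fin (2 ^ ℓ),
          |(∏ i : Fin k, ∫ U, ‖(Y * U * V).1 (x i) 0‖ ^ 2 ∂μ)
            - ∫ U, ∏ i : Fin k, ‖(Y * U * V).1 (x i) 0‖ ^ 2 ∂μ|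
          ≤ C * (k : ℝ) ^ 2 * (2 : ℝ) ^ (-(ℓ : ℝ) / 4) := by
  refine ⟨2, two_pos, fun ℓ k _ _ Y V μ _ _ =>
    (fixed_vs_fresh_unitary_tvd_parallel_general Y V 0 μ).trans ?_⟩
  simpa using choose_two_mul_four_div_le ℓ k
end

section
/- There exist universal constants c, C > 0 such that for every integer D ≥ 2 and all D×D complex unitary matrices Y and V, the Haar probability of the set of unitaries U ∈ U(D) for which there exists some x ∈ {1,...,D} with |(Y U V)_{x,0}|² ≥ D^{−1/4} is at most C · D · exp(−c·√D). -/
open MeasureTheory Matrix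

/-! Left invariance makes the law of `U v` unitarily invariant, so for a unit vector `u` the
exponential moments of `Re ⟪u, U v⟫` do not depend on `u`. Replace `u` by the vectors all of whose
coordinates are `±1 / √D` and average over the signs: the moment becomes a product of hyperbolic
cosines, and `cosh a ≤ exp (a ^ 2 / 2)` shows that `Re ⟪u, U v⟫` is subgaussian with variance
proxy `1 / D`. The Chernoff bound for the real and imaginary parts controls one entry, and a union
bound over the `D` rows finishes. -/

lemma sum_exp_sum_units_int_mul_le {ι : Type*} [Fintype ι] [DecidableEq ι] (a : ι → ℝ) :
    ∑ e : ι → ℤˣ, Real.exp (∑ i, ((e i : ℤ) : ℝ) * a i)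
      ≤ 2 ^ Fintype.card ι * Real.exp ((∑ i, a i ^ 2) / 2) := by
  calc ∑ e : ι → ℤˣ, Real.exp (∑ i, ((e i : ℤ) : ℝ) * a i)
      = ∏ i, ∑ s : ℤˣ, Real.exp (((s : ℤ) : ℝ) * a i) := by
        simp only [Real.exp_sum, Fintype.prod_sum]
    _ = ∏ i, 2 * Real.cosh (a i) := by
        simp [UnitsInt.univ, Real.cosh_eq, mul_div_cancel₀]
    _ ≤ ∏ i, 2 * Real.exp (a i ^ 2 / 2) := by
        gcongr with i
        exact Real.cosh_le_exp_half_sq (a i)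
    _ = 2 ^ Fintype.card ι * Real.exp ((∑ i, a i ^ 2) / 2) := by
        rw [Finset.prod_mul_distrib, ← Real.exp_sum, Finset.sum_div, Finset.prod_const,
          Finset.card_univ]

section InnerProductSpace

open InnerProductSpace RCLike Module ProbabilityTheory

variable {𝕜 E : Type*} [RCLike 𝕜] [NormedAddCommGroup E] [InnerProductSpace 𝕜 E]

section SignVector

variable {ι : Type*} [Fintype ι]

/-- The combination of an orthonormal basis with coefficients `e i = ±1`. Averaging over `e`
turns an exponential moment into a product over the coordinates. -/
noncomputable def signVector (b : OrthonormalBasis ι 𝕜 E) (e : ι → ℤˣ) : E :=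
  ∑ i, ((e i : ℤ) : 𝕜) • b i

lemma norm_signVector (b : OrthonormalBasis ι 𝕜 E) (e : ι → ℤˣ) :
    ‖signVector b e‖ = √(Fintype.card ι) := by
  have hcoord (i : ι) : ‖inner 𝕜 (b i) (signVector b e)‖ ^ 2 = 1 := by
    rw [signVector, b.orthonormal.inner_right_fintype]
    rcases Int.units_eq_one_or (e i) with h | h <;> simp [h]
  rw [← Real.sqrt_sq (norm_nonneg _), ← b.sum_sq_norm_inner_right]
  simp [hcoord]

lemma re_inner_signVector (b : OrthonormalBasis ι 𝕜 E) (e : ι → ℤˣ) (x : E) :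
    re (inner 𝕜 (signVector b e) x) = ∑ i, ((e i : ℤ) : ℝ) * re (inner 𝕜 (b i) x) := by
  simp [signVector, sum_inner, inner_smul_left]

lemma sum_exp_mul_re_inner_signVector_le [DecidableEq ι] (b : OrthonormalBasis ι 𝕜 E) (r : ℝ)
    (x : E) :
    ∑ e, Real.exp (r * re (inner 𝕜 (signVector b e) x))
      ≤ 2 ^ Fintype.card ι * Real.exp (r ^ 2 * ‖x‖ ^ 2 / 2) := by
  calc ∑ e, Real.exp (r * re (inner 𝕜 (signVector b e) x))
      = ∑ e : ι → ℤˣ, Real.exp (∑ i, ((e i : ℤ) : ℝ) * (r * re (inner 𝕜 (b i) x))) := by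
        simp only [re_inner_signVector, Finset.mul_sum, mul_left_comm]
    _ ≤ 2 ^ Fintype.card ι * Real.exp ((∑ i, (r * re (inner 𝕜 (b i) x)) ^ 2) / 2) :=
        sum_exp_sum_units_int_mul_le _
    _ ≤ 2 ^ Fintype.card ι * Real.exp (r ^ 2 * ‖x‖ ^ 2 / 2) := by
        simp only [← b.sum_sq_norm_inner_right, Finset.mul_sum, mul_pow]
        gcongr _ * Real.exp ((∑ i, _ * ?_) / 2) with i
        exact sq_le_sq.2 (by simpa using abs_re_le_norm (inner 𝕜 (b i) x))

end SignVector

variable (𝕜) in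
lemma exists_linearIsometryEquiv_apply_eq [FiniteDimensional 𝕜 E] {u v : E} (h : ‖u‖ = ‖v‖) :
    ∃ g : E ≃ₗᵢ[𝕜] E, g u = v := by
  rcases eq_or_ne u 0 with rfl | hu
  · exact ⟨.refl 𝕜 E, by simpa [eq_comm] using h⟩
  have hv : v ≠ 0 := by rwa [← norm_ne_zero_iff, ← h, norm_ne_zero_iff]
  have hu₁ : ‖(‖u‖⁻¹ : 𝕜) • u‖ = 1 := norm_smul_inv_norm hu
  have hv₁ : ‖(‖v‖⁻¹ : 𝕜) • v‖ = 1 := norm_smul_inv_norm hv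
  let φ := LinearIsometryEquiv.toSpanUnitSingleton (𝕜 := 𝕜) _ hu₁
  let ψ := LinearIsometryEquiv.toSpanUnitSingleton (𝕜 := 𝕜) _ hv₁
  let L := (Submodule.subtypeₗᵢ _).comp (φ.symm.trans ψ).toLinearIsometry
  let g := L.extend.toLinearIsometryEquiv rfl
  have hφ : (φ (‖u‖ : 𝕜) : E) = u := by simp [φ, hu]
  have hψ : (ψ (‖u‖ : 𝕜) : E) = v := by simp [ψ, h, hv]
  refine ⟨g, ?_⟩
  calc g u = L.extend (φ (‖u‖ : 𝕜)) := by rw [hφ]; rfl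
    _ = v := by rw [L.extend_apply, ← hψ]; simp [L]

variable [MeasurableSpace E]

lemma integrable_exp_mul_re_inner [OpensMeasurableSpace E] {ν : Measure E} [IsFiniteMeasure ν]
    {R : ℝ} (hball : ∀ᵐ x ∂ν, ‖x‖ ≤ R) (t : ℝ) (u : E) :
    Integrable (fun x => Real.exp (t * re (inner 𝕜 u x))) ν := by
  refine .of_bound (Continuous.aestronglyMeasurable (by fun_prop))
    (Real.exp (|t| * (‖u‖ * R))) ?_
  filter_upwards [hball] with x hx
  have hbound : |t * re (inner 𝕜 u x)| ≤ |t| * (‖u‖ * R) := by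
    calc |t * re (inner 𝕜 u x)| = |t| * |re (inner 𝕜 u x)| := abs_mul _ _
      _ ≤ |t| * (‖u‖ * ‖x‖) := by
        gcongr
        exact (abs_re_le_norm _).trans (norm_inner_le_norm u x)
      _ ≤ |t| * (‖u‖ * R) := by gcongr
  rw [Real.norm_eq_abs, Real.abs_exp]
  exact Real.exp_le_exp.2 ((le_abs_self _).trans hbound)

variable (𝕜) in
/-- A measure on an inner product space is unitarily invariant if every linear isometric
automorphism preserves it, as for the law of a uniformly random point of a sphere. -/
def UnitarilyInvariant (ν : Measure E) : Prop :=
  ∀ g : E ≃ₗᵢ[𝕜] E, MeasurePreserving g ν ν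

namespace UnitarilyInvariant

variable [BorelSpace E] [FiniteDimensional 𝕜 E] {ν : Measure E}

lemma integral_comp_inner_eq {G : Type*} [NormedAddCommGroup G] [NormedSpace ℝ G]
    (hν : UnitarilyInvariant 𝕜 ν) (f : 𝕜 → G) {u v : E} (h : ‖u‖ = ‖v‖) :
    ∫ x, f (inner 𝕜 u x) ∂ν = ∫ x, f (inner 𝕜 v x) ∂ν := by
  obtain ⟨g, rfl⟩ := exists_linearIsometryEquiv_apply_eq 𝕜 h.symm
  simpa using ((hν g).integral_comp g.toHomeomorph.measurableEmbedding
    fun x => f (inner 𝕜 (g v) x)).symm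

variable [IsProbabilityMeasure ν]

lemma integral_exp_re_inner_le [Nontrivial E] (hν : UnitarilyInvariant 𝕜 ν)
    (hball : ∀ᵐ x ∂ν, ‖x‖ ≤ 1) (u : E) :
    ∫ x, Real.exp (re (inner 𝕜 u x)) ∂ν ≤ Real.exp (‖u‖ ^ 2 / (2 * finrank 𝕜 E)) := by
  let b := stdOrthonormalBasis 𝕜 E
  have hn : (0 : ℝ) < finrank 𝕜 E := mod_cast finrank_pos
  let r : ℝ := ‖u‖ / √(finrank 𝕜 E)
  have hr : r ^ 2 = ‖u‖ ^ 2 / finrank 𝕜 E := by rw [div_pow, Real.sq_sqrt hn.le]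
  have hint (e : Fin (finrank 𝕜 E) → ℤˣ) :
      ∫ x, Real.exp (r * re (inner 𝕜 (signVector b e) x)) ∂ν
        = ∫ x, Real.exp (re (inner 𝕜 u x)) ∂ν := by
    have hnorm : ‖(r : 𝕜) • signVector b e‖ = ‖u‖ := by
      rw [norm_smul, norm_ofReal, norm_signVector, Fintype.card_fin, abs_of_nonneg (by positivity),
        div_mul_cancel₀ _ (by positivity)]
    simpa [inner_smul_left] using
      hν.integral_comp_inner_eq (fun z => Real.exp (re z)) hnorm
  have hsum : 2 ^ finrank 𝕜 E * ∫ x, Real.exp (re (inner 𝕜 u x)) ∂ν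
      ≤ 2 ^ finrank 𝕜 E * Real.exp (r ^ 2 / 2) := by
    calc 2 ^ finrank 𝕜 E * ∫ x, Real.exp (re (inner 𝕜 u x)) ∂ν
        = ∑ e, ∫ x, Real.exp (r * re (inner 𝕜 (signVector b e) x)) ∂ν := by simp [hint]
      _ = ∫ x, ∑ e, Real.exp (r * re (inner 𝕜 (signVector b e) x)) ∂ν :=
          (integral_finsetSum _ fun e _ => integrable_exp_mul_re_inner hball r _).symm
      _ ≤ ∫ _, 2 ^ finrank 𝕜 E * Real.exp (r ^ 2 / 2) ∂ν := by
          refine integral_mono_ae (integrable_finsetSum _ fun e _ =>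
            integrable_exp_mul_re_inner hball r _) (integrable_const _) ?_
          filter_upwards [hball] with x hx
          refine (sum_exp_mul_re_inner_signVector_le b r x).trans ?_
          rw [Fintype.card_fin]
          gcongr
          exact mul_le_of_le_one_right (sq_nonneg r) (pow_le_one₀ (norm_nonneg x) hx)
      _ = 2 ^ finrank 𝕜 E * Real.exp (r ^ 2 / 2) := by simp
  have hmean := le_of_mul_le_mul_left hsum (by positivity)
  rwa [hr, div_div, mul_comm _ (2 : ℝ)] at hmean

lemma hasSubgaussianMGF_re_inner [Nontrivial E] (hν : UnitarilyInvariant 𝕜 ν)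
    (hball : ∀ᵐ x ∂ν, ‖x‖ ≤ 1) {u : E} (hu : ‖u‖ ≤ 1) :
    HasSubgaussianMGF (fun x => re (inner 𝕜 u x)) (finrank 𝕜 E : NNReal)⁻¹ ν where
  integrable_exp_mul t := integrable_exp_mul_re_inner hball t u
  mgf_le t := by
    calc mgf (fun x => re (inner 𝕜 u x)) ν t
        = ∫ x, Real.exp (re (inner 𝕜 ((t : 𝕜) • u) x)) ∂ν := by simp [mgf, inner_smul_left]
      _ ≤ Real.exp (‖(t : 𝕜) • u‖ ^ 2 / (2 * finrank 𝕜 E)) := hν.integral_exp_re_inner_le hball _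
      _ ≤ Real.exp (t ^ 2 / (2 * finrank 𝕜 E)) := by
          rw [norm_smul, norm_ofReal, mul_pow, sq_abs]
          gcongr
          exact mul_le_of_le_one_right (sq_nonneg t) (pow_le_one₀ (norm_nonneg u) hu)
      _ = Real.exp (((finrank 𝕜 E : NNReal)⁻¹ : NNReal) * t ^ 2 / 2) := by
          push_cast
          congr 1
          ring

lemma measureReal_abs_re_inner_ge_le [Nontrivial E] (hν : UnitarilyInvariant 𝕜 ν)
    (hball : ∀ᵐ x ∂ν, ‖x‖ ≤ 1) {u : E} (hu : ‖u‖ ≤ 1) {s : ℝ} (hs : 0 ≤ s) :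
    ν.real {x | s ≤ |re (inner 𝕜 u x)|} ≤ 2 * Real.exp (-(finrank 𝕜 E * s ^ 2 / 2)) := by
  have hexp : -s ^ 2 / (2 * ((finrank 𝕜 E : NNReal)⁻¹ : NNReal))
      = -(finrank 𝕜 E * s ^ 2 / 2) := by
    push_cast
    field_simp
  have hsub := hν.hasSubgaussianMGF_re_inner hball hu
  have hupper := hsub.measure_ge_le hs
  have hlower := hsub.neg.measure_ge_le hs
  rw [hexp] at hupper hlower
  calc ν.real {x | s ≤ |re (inner 𝕜 u x)|}
      = ν.real ({x | s ≤ re (inner 𝕜 u x)} ∪ {x | s ≤ -re (inner 𝕜 u x)}) := by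
        simp only [le_abs, Set.ofPred_or]
    _ ≤ ν.real {x | s ≤ re (inner 𝕜 u x)} + ν.real {x | s ≤ -re (inner 𝕜 u x)} :=
        measureReal_union_le _ _
    _ ≤ Real.exp (-(finrank 𝕜 E * s ^ 2 / 2)) + Real.exp (-(finrank 𝕜 E * s ^ 2 / 2)) :=
        add_le_add hupper hlower
    _ = 2 * Real.exp (-(finrank 𝕜 E * s ^ 2 / 2)) := (two_mul _).symm

lemma measureReal_norm_sq_inner_ge_le [Nontrivial E] (hν : UnitarilyInvariant 𝕜 ν)
    (hball : ∀ᵐ x ∂ν, ‖x‖ ≤ 1) {u : E} (hu : ‖u‖ ≤ 1) {t : ℝ} (ht : 0 ≤ t) :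
    ν.real {x | t ≤ ‖inner 𝕜 u x‖ ^ 2} ≤ 4 * Real.exp (-(finrank 𝕜 E * t / 4)) := by
  let A (v : E) : Set E := {x | √(t / 2) ≤ |re (inner 𝕜 v x)|}
  have htail {v : E} (hv : ‖v‖ ≤ 1) : ν.real (A v) ≤ 2 * Real.exp (-(finrank 𝕜 E * t / 4)) := by
    have h := hν.measureReal_abs_re_inner_ge_le hball hv (Real.sqrt_nonneg (t / 2))
    rw [Real.sq_sqrt (by positivity)] at h
    convert h using 3
    ring
  have hI : ‖(I : 𝕜) • u‖ ≤ 1 := by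
    have hI₁ : ‖(I : 𝕜)‖ ≤ 1 := by rw [norm_I]; split_ifs <;> norm_num
    rw [norm_smul]
    exact mul_le_one₀ hI₁ (norm_nonneg u) hu
  have hcover : {x | t ≤ ‖inner 𝕜 u x‖ ^ 2} ⊆ A u ∪ A ((I : 𝕜) • u) := by
    intro x hx
    have him : re (inner 𝕜 ((I : 𝕜) • u) x) = im (inner 𝕜 u x) := by
      simp [inner_smul_left]
    by_contra hnot
    simp only [A, Set.mem_union, Set.mem_ofPred_eq, him, not_or, not_le] at hnot hx
    have hre := (Real.lt_sqrt (abs_nonneg _)).1 hnot.1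
    have him := (Real.lt_sqrt (abs_nonneg _)).1 hnot.2
    rw [sq_abs] at hre him
    rw [norm_sq_eq_def] at hx
    linarith
  calc ν.real {x | t ≤ ‖inner 𝕜 u x‖ ^ 2}
      ≤ ν.real (A u ∪ A ((I : 𝕜) • u)) := measureReal_mono hcover
    _ ≤ ν.real (A u) + ν.real (A ((I : 𝕜) • u)) := measureReal_union_le _ _
    _ ≤ 4 * Real.exp (-(finrank 𝕜 E * t / 4)) := by linarith [htail hu, htail hI]

end UnitarilyInvariant

end InnerProductSpace

section UnitaryGroup

open WithLp

variable {ι : Type*} [Fintype ι] [DecidableEq ι]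

instance inst_s2 {m n : Type*} [Countable m] [Countable n] : BorelSpace (Matrix m n ℂ) :=
  inferInstanceAs (BorelSpace (m → n → ℂ))

lemma norm_toLp_mulVec_of_mem_unitaryGroup {𝕜 : Type*} [RCLike 𝕜] {U : Matrix ι ι 𝕜}
    (hU : U ∈ unitaryGroup ι 𝕜) (v : ι → 𝕜) : ‖toLp 2 (U *ᵥ v)‖ = ‖toLp 2 v‖ :=
  (Unitary.linearIsometryEquiv ⟨_, Unitary.map_mem (toEuclideanCLM (𝕜 := 𝕜)) hU⟩).norm_map _

lemma exists_unitaryGroup_toLp_mulVec_eq {𝕜 : Type*} [RCLike 𝕜]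
    (g : EuclideanSpace 𝕜 ι ≃ₗᵢ[𝕜] EuclideanSpace 𝕜 ι) :
    ∃ W : unitaryGroup ι 𝕜, ∀ v : ι → 𝕜, toLp 2 (W.1 *ᵥ v) = g (toLp 2 v) := by
  let u := Unitary.linearIsometryEquiv.symm g
  refine ⟨⟨(toEuclideanCLM (𝕜 := 𝕜)).symm u.1, Unitary.map_mem _ u.2⟩, fun v => ?_⟩
  rw [← toEuclideanCLM_toLp, StarAlgEquiv.apply_symm_apply]
  rfl

lemma measurable_toLp_unitaryGroup_mulVec (v : ι → ℂ) :
    Measurable fun U : unitaryGroup ι ℂ => toLp 2 (U.1 *ᵥ v) :=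
  Continuous.measurable (by fun_prop)

variable (μ : Measure (unitaryGroup ι ℂ)) [μ.IsMulLeftInvariant]

lemma unitarilyInvariant_map_toLp_mulVec (v : ι → ℂ) :
    UnitarilyInvariant ℂ (μ.map fun U => toLp 2 (U.1 *ᵥ v)) := by
  intro g
  obtain ⟨W, hW⟩ := exists_unitaryGroup_toLp_mulVec_eq g
  have hv := measurable_toLp_unitaryGroup_mulVec v
  refine ⟨g.continuous.measurable, ?_⟩
  calc (μ.map fun U => toLp 2 (U.1 *ᵥ v)).map g
      = (μ.map (W * ·)).map fun U => toLp 2 (U.1 *ᵥ v) := by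
        rw [Measure.map_map g.continuous.measurable hv,
          Measure.map_map hv (measurable_const_mul W)]
        congr 1
        ext1 U
        simp [← hW]
    _ = μ.map fun U => toLp 2 (U.1 *ᵥ v) := by rw [map_mul_left_eq_self]

variable [IsProbabilityMeasure μ]

lemma measureReal_norm_sq_unitaryGroup_mulVec_ge_le {v : ι → ℂ} (hv : ‖toLp 2 v‖ ≤ 1) (x : ι)
    {t : ℝ} (ht : 0 ≤ t) :
    μ.real {U | t ≤ ‖(U.1 *ᵥ v) x‖ ^ 2} ≤ 4 * Real.exp (-(Fintype.card ι * t / 4)) := by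
  have : Nonempty ι := ⟨x⟩
  have hmeas := measurable_toLp_unitaryGroup_mulVec v
  have : IsProbabilityMeasure (μ.map fun U => toLp 2 (U.1 *ᵥ v)) :=
    Measure.isProbabilityMeasure_map hmeas.aemeasurable
  have hball : ∀ᵐ w ∂(μ.map fun U => toLp 2 (U.1 *ᵥ v)), ‖w‖ ≤ 1 :=
    (ae_map_iff hmeas.aemeasurable (measurableSet_le measurable_norm measurable_const)).2 <|
      .of_forall fun U => (norm_toLp_mulVec_of_mem_unitaryGroup U.2 v).trans_le hv
  have htail := (unitarilyInvariant_map_toLp_mulVec μ v).measureReal_norm_sq_inner_ge_le hball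
    (u := EuclideanSpace.single x 1) (by simp) ht
  rw [map_measureReal_apply hmeas (measurableSet_le measurable_const (by fun_prop))] at htail
  simpa [EuclideanSpace.inner_single_left] using htail

theorem large_coordinate_probability_bound_general (Y V : unitaryGroup ι ℂ) (y : ι) {t : ℝ}
    (ht : 0 ≤ t) :
    μ {U | ∃ x, t ≤ ‖(Y * U * V).1 x y‖ ^ 2}
      ≤ ENNReal.ofReal (4 * Fintype.card ι * Real.exp (-(Fintype.card ι * t / 4))) := by
  have hcol : ‖toLp 2 (V.1.col y)‖ ≤ 1 := by
    rw [← mulVec_single_one, norm_toLp_mulVec_of_mem_unitaryGroup V.2]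
    simp
  calc μ {U | ∃ x, t ≤ ‖(Y * U * V).1 x y‖ ^ 2}
      = μ {U | ∃ x, t ≤ ‖(U * V).1 x y‖ ^ 2} :=
        measure_preimage_mul μ Y {U | ∃ x, t ≤ ‖(U * V).1 x y‖ ^ 2}
    _ = ENNReal.ofReal (μ.real (⋃ x, {U | t ≤ ‖(U * V).1 x y‖ ^ 2})) := by
        rw [ofReal_measureReal, Set.ofPred_exists]
    _ ≤ ENNReal.ofReal (∑ x, μ.real {U | t ≤ ‖(U * V).1 x y‖ ^ 2}) :=
        ENNReal.ofReal_le_ofReal (measureReal_iUnion_fintype_le _)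
    _ ≤ ENNReal.ofReal (∑ _x : ι, 4 * Real.exp (-(Fintype.card ι * t / 4))) := by
        gcongr with x
        exact measureReal_norm_sq_unitaryGroup_mulVec_ge_le μ hcol x ht
    _ = ENNReal.ofReal (4 * Fintype.card ι * Real.exp (-(Fintype.card ι * t / 4))) := by
        rw [Finset.sum_const, Finset.card_univ, nsmul_eq_mul, mul_left_comm, mul_assoc]

end UnitaryGroup

lemma exp_neg_mul_rpow_neg_quarter_le {a : ℝ} (ha : 1 ≤ a) :
    Real.exp (-(a * a ^ (-(1 : ℝ) / 4) / 4)) ≤ Real.exp (-(1 / 4) * √a) := by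
  have hsqrt : √a ≤ a * a ^ (-(1 : ℝ) / 4) := by
    calc √a = a ^ (1 / 2 : ℝ) := Real.sqrt_eq_rpow a
      _ ≤ a ^ (1 + -(1 : ℝ) / 4) := Real.rpow_le_rpow_of_exponent_le ha (by norm_num)
      _ = a * a ^ (-(1 : ℝ) / 4) := Real.rpow_one_add' (by positivity) (by norm_num)
  exact Real.exp_le_exp.2 (by linarith)

/-- There are universal constants `c, C > 0` such that for every `D ≥ 2`
and all unitaries `Y, V`, the Haar probability that some coordinate satisfies
`|(Y U V)_{x,0}|² ≥ D^{−1/4}` is at most `C · D · exp(−c·√D)`. -/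
theorem large_coordinate_probability_bound :
    ∃ c C : ℝ, 0 < c ∧ 0 < C ∧
      ∀ (D : ℕ) (hD : 2 ≤ D),
      ∀ (Y V : ↥(Matrix.unitaryGroup (Fin D) ℂ))
        (μ : Measure ↥(Matrix.unitaryGroup (Fin D) ℂ)),
        μ.IsHaarMeasure → IsProbabilityMeasure μ →
        μ {U | ∃ x : Fin D, (D : ℝ) ^ (-(1 : ℝ) / 4) ≤ ‖(Y * U * V).1 x ⟨0, by omega⟩‖ ^ 2}
          ≤ ENNReal.ofReal (C * D * Real.exp (-c * Real.sqrt D)) := by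
  refine ⟨1 / 4, 4, by norm_num, by norm_num, fun D hD Y V μ _ _ =>
    (large_coordinate_probability_bound_general μ Y V _ (by positivity)).trans ?_⟩
  grw [Fintype.card_fin, exp_neg_mul_rpow_neg_quarter_le (mod_cast one_le_two.trans hD)]
end

section
/- If in addition k² < D, then for every fixed s_0 ∈ {1,...,D_m}: (1/D^k) · ∑_{τ ≠ id} ∑_{(s_1,...,s_k) ∈ {1,...,D_m}^k} ∏_{i=1}^k |⟨y^{τ(i)}_{s_0 s_1 ... s_{τ(i)}} | y^i_{s_0 s_1 ... s_i}⟩| · λ^i_{s_0 s_1 ... s_i} ≤ (1+k)·(k²/D) / (1 − k²/D), where the outer sum ranges over all non-identity permutations τ of {1,...,k}. -/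
open Matrix

/-!
Fix a permutation `τ` and charge the overlap `|⟨y^{τ(i)}|y^i⟩|` to the later of the rounds `i` and
`τ(i)`. Round `j` then receives at most two nontrivial overlaps, of `y^j` with the vectors of the
earlier rounds `τ(j)` and `τ⁻¹(j)`. Summing out the rounds from the last to the first,
Cauchy–Schwarz separates the two overlaps, and by completeness each contributes
`(∑ λ |⟨·|y^j⟩|²)^{1/2} = 1` instead of `(∑ λ)^{1/2} = √D`. In total `τ` contributes at most
`D^k · D^{-m/2}`, where `m ≥ 2` is the number of points it moves. At most `k^m` permutations move
exactly `m` points, which leaves the geometric series `∑_{m ≥ 2} (k/√D)^m`.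
-/

section Counting

open Finset

variable {α : Type*} [Fintype α] [DecidableEq α]

/-- A permutation `τ` is determined by the values it takes along an enumeration of its support:
their range is the support, so they determine the enumeration as well. -/
lemma card_perm_card_support_eq_le (m : ℕ) :
    #{τ : Equiv.Perm α | #τ.support = m} ≤ Fintype.card α ^ m := by
  let enum (A : Finset α) (hA : #A = m) (i : Fin m) : α := (A.equivFinOfCardEq hA).symm i
  have exists_enum {A : Finset α} (hA : #A = m) {x : α} (hx : x ∈ A) : ∃ i, enum A hA i = x :=
    ⟨A.equivFinOfCardEq hA ⟨x, hx⟩, by simp [enum]⟩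
  let values (τ : {τ : Equiv.Perm α // #τ.support = m}) (i : Fin m) : α :=
    τ.1 (enum τ.1.support τ.2 i)
  have range_values (τ) : Set.range (values τ) = τ.1.support := by
    ext x
    constructor
    · rintro ⟨i, rfl⟩
      exact Equiv.Perm.apply_mem_support.mpr (Subtype.prop _)
    · intro hx
      obtain ⟨y, rfl⟩ := τ.1.surjective x
      obtain ⟨i, rfl⟩ := exists_enum τ.2 (Equiv.Perm.apply_mem_support.mp hx)
      exact ⟨i, rfl⟩
  have values_injective : Function.Injective values := by
    rintro ⟨σ, hσ⟩ ⟨τ, hτ⟩ h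
    have hsupp : σ.support = τ.support := by
      rw [← Finset.coe_inj, ← range_values ⟨σ, hσ⟩, h, range_values]
    refine Subtype.ext (Equiv.ext fun x => ?_)
    by_cases hx : x ∈ σ.support
    · obtain ⟨i, rfl⟩ := exists_enum hσ hx
      simpa only [values, hsupp] using congrFun h i
    · rw [Equiv.Perm.notMem_support.mp hx, Equiv.Perm.notMem_support.mp (hsupp ▸ hx)]
  simpa [Fintype.card_subtype] using Fintype.card_le_of_injective values values_injective

lemma sum_perm_ne_one_pow_card_support_le {r : ℝ} (hr : 0 ≤ r) (hr_lt : Fintype.card α * r < 1) :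
    ∑ τ : Equiv.Perm α with τ ≠ 1, r ^ #τ.support ≤
      (Fintype.card α * r) ^ 2 / (1 - Fintype.card α * r) := by
  set N := Fintype.card α
  have card_support_mem : ∀ τ ∈ ({τ : Equiv.Perm α | τ ≠ 1} : Finset _),
      #τ.support ∈ Ico 2 (N + 1) := fun τ hτ =>
    mem_Ico.mpr ⟨Equiv.Perm.two_le_card_support_of_ne_one (mem_filter.mp hτ).2,
      Nat.lt_succ_of_le (card_le_univ _)⟩
  calc ∑ τ : Equiv.Perm α with τ ≠ 1, r ^ #τ.support
      = ∑ m ∈ Ico 2 (N + 1), #{τ : Equiv.Perm α | τ ≠ 1 ∧ #τ.support = m} * r ^ m := by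
        simp_rw [← sum_fiberwise_of_maps_to' card_support_mem (fun m => r ^ m), sum_const,
          nsmul_eq_mul, filter_filter]
    _ ≤ ∑ m ∈ Ico 2 (N + 1), (N * r) ^ m := by
        refine sum_le_sum fun m _ => ?_
        have card_le : #{τ : Equiv.Perm α | τ ≠ 1 ∧ #τ.support = m} ≤ N ^ m :=
          (card_le_card <| monotone_filter_right _ fun _ _ => And.right).trans
            (card_perm_card_support_eq_le m)
        rw [mul_pow]
        gcongr
        exact_mod_cast card_le
    _ ≤ (N * r) ^ 2 / (1 - N * r) := geom_sum_Ico_le_of_lt_one (by positivity) hr_lt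

end Counting

section Charging

variable {ι M : Type*} [Fintype ι] [LinearOrder ι] [CommMonoid M]

lemma prod_apply_perm_eq_prod_ite_lt (τ : Equiv.Perm ι) {F : ι → ι → M}
    (symm : ∀ i j, F i j = F j i) (diag : ∀ i, F i i = 1) :
    ∏ i, F (τ i) i =
      ∏ i, (if τ i < i then F (τ i) i else 1) * (if τ⁻¹ i < i then F (τ⁻¹ i) i else 1) := by
  rw [Finset.prod_mul_distrib,
    ← Equiv.prod_comp τ (fun i => if τ⁻¹ i < i then F (τ⁻¹ i) i else 1), ← Finset.prod_mul_distrib]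
  refine Finset.prod_congr rfl fun i _ => ?_
  rcases lt_trichotomy (τ i) i with h | h | h
  · simp [h, h.not_gt]
  · simp [h, diag, τ.symm_apply_eq.mpr h.symm]
  · simp [h, h.not_gt, symm i]

lemma prod_ite_perm_lt (τ : Equiv.Perm ι) (r : M) :
    ∏ i, (if τ i < i then r else 1) * (if τ⁻¹ i < i then r else 1) = r ^ τ.support.card := by
  have ite_ne_of_lt (i j : ι) :
      (if j < i then (if j ≠ i then r else 1) else 1) = if j < i then r else 1 := by
    split_ifs with hlt hne <;> first | rfl | exact absurd hlt.ne hne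
  have key := prod_apply_perm_eq_prod_ite_lt τ (F := fun i j => if i ≠ j then r else 1)
    (fun i j => by simp only [ne_comm]) (by simp)
  simp only [ite_ne_of_lt] at key
  rw [← key, Finset.prod_ite, Finset.prod_const_one, mul_one, Finset.prod_const]
  rfl

end Charging

section Adapted

variable {α β : Type*} {n : ℕ}

lemma dependsOn_cons {f : (Fin (n + 1) → α) → β} {i : Fin n}
    (hf : DependsOn f (Set.Iic i.succ)) (a : α) :
    DependsOn (fun s : Fin n → α => f (Fin.cons a s)) (Set.Iic i) := by
  refine fun s s' h => hf fun j hj => ?_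
  cases j using Fin.cases with
  | zero => rfl
  | succ j => exact h j (Fin.succ_le_succ_iff.mp hj)

lemma sum_prod_le_prod_of_sum_update_le [Fintype α] {f : Fin n → (Fin n → α) → ℝ} {C : Fin n → ℝ}
    (f_nonneg : ∀ i s, 0 ≤ f i s) (C_nonneg : ∀ i, 0 ≤ C i)
    (f_dependsOn : ∀ i, DependsOn (f i) (Set.Iic i))
    (sum_le : ∀ i s, ∑ t, f i (Function.update s i t) ≤ C i) :
    ∑ s, ∏ i, f i s ≤ ∏ i, C i := by
  induction n with
  | zero => simp
  | succ n ih =>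
    have head_eq (t : α) (s : Fin n → α) (a : Fin (n + 1) → α) :
        f 0 (Fin.cons t s) = f 0 (Function.update a 0 t) :=
      f_dependsOn 0 fun j hj => by simp [nonpos_iff_eq_zero.mp (Set.mem_Iic.mp hj)]
    have sum_head_le : ∑ t, f 0 (Fin.cons t fun _ => t) ≤ C 0 := by
      rcases isEmpty_or_nonempty α with _ | ⟨⟨a⟩⟩
      · simpa using C_nonneg 0
      · simpa only [head_eq _ _ fun _ => a] using sum_le 0 fun _ => a
    have sum_tail_le (t : α) :
        ∑ s : Fin n → α, ∏ i : Fin n, f i.succ (Fin.cons t s) ≤ ∏ i : Fin n, C i.succ :=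
      ih (fun _ _ => f_nonneg _ _) (fun _ => C_nonneg _)
        (fun i => dependsOn_cons (f_dependsOn i.succ) t)
        fun i s => by simpa only [Fin.cons_update] using sum_le i.succ (Fin.cons t s)
    calc ∑ s, ∏ i, f i s
        = ∑ t, f 0 (Fin.cons t fun _ => t) *
            ∑ s : Fin n → α, ∏ i : Fin n, f i.succ (Fin.cons t s) := by
          rw [← (Fin.consEquiv fun _ => α).sum_comp, Fintype.sum_prod_type]
          refine Finset.sum_congr rfl fun t _ => ?_
          rw [Finset.mul_sum]
          refine Finset.sum_congr rfl fun s _ => ?_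
          rw [Fin.prod_univ_succ, head_eq t (fun _ => t) (Fin.cons t s), ← head_eq t s]
          rfl
      _ ≤ ∑ t, f 0 (Fin.cons t fun _ => t) * ∏ i : Fin n, C i.succ := by
          gcongr with t
          exacts [f_nonneg _ _, sum_tail_le t]
      _ ≤ C 0 * ∏ i : Fin n, C i.succ := by
          rw [← Finset.sum_mul]
          exact mul_le_mul_of_nonneg_right sum_head_le (Finset.prod_nonneg fun _ _ => C_nonneg _)
      _ = ∏ i, C i := (Fin.prod_univ_succ C).symm

end Adapted

lemma sum_mul_mul_le_sqrt_mul_sqrt {ι : Type*} (s : Finset ι) {w : ι → ℝ} (hw : ∀ i, 0 ≤ w i)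
    (a b : ι → ℝ) :
    ∑ i ∈ s, w i * (a i * b i) ≤ √(∑ i ∈ s, w i * a i ^ 2) * √(∑ i ∈ s, w i * b i ^ 2) := by
  convert Real.sum_mul_le_sqrt_mul_sqrt s (fun i => √(w i) * a i) (fun i => √(w i) * b i) using 2
  · rw [mul_mul_mul_comm, Real.mul_self_sqrt (hw _)]
  all_goals simp_rw [mul_pow, Real.sq_sqrt (hw _)]

section POVM

open Module InnerProductSpace

variable (𝕜 : Type*) {E : Type*} [RCLike 𝕜] [NormedAddCommGroup E] [InnerProductSpace 𝕜 E]

/-- A rank-one POVM: unit vectors `v t` with weights `w t ≥ 0` satisfying the completeness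
relation `∑ t, w t |v t⟩⟨v t| = 1`. -/
structure IsRankOnePOVM {ι : Type*} [Fintype ι] (w : ι → ℝ) (v : ι → E) : Prop where
  weight_nonneg : ∀ t, 0 ≤ w t
  norm_eq_one : ∀ t, ‖v t‖ = 1
  sum_smul_rankOne : ∑ t, (w t : 𝕜) • rankOne 𝕜 (v t) (v t) = (1 : E →L[𝕜] E)

namespace IsRankOnePOVM

variable {𝕜} {ι : Type*} [Fintype ι] {w : ι → ℝ} {v : ι → E}

lemma sum_weight_mul_norm_inner_sq (h : IsRankOnePOVM 𝕜 w v) (u : E) :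
    ∑ t, w t * ‖⟪u, v t⟫_𝕜‖ ^ 2 = ‖u‖ ^ 2 := by
  have key := congrArg (fun A : E →L[𝕜] E => ⟪u, A u⟫_𝕜) h.sum_smul_rankOne
  simp only [FunLike.coe_sum, Finset.sum_apply, FunLike.coe_smul, Pi.smul_apply, rankOne_apply,
    inner_sum, inner_smul_right, one_apply_eq_self, inner_self_eq_norm_sq_to_K] at key
  rw [← RCLike.ofReal_inj (K := 𝕜)]
  push_cast
  rw [← key]
  refine Finset.sum_congr rfl fun t _ => ?_
  rw [← RCLike.conj_mul, inner_conj_symm]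

lemma sum_weight [FiniteDimensional 𝕜 E] (h : IsRankOnePOVM 𝕜 w v) :
    ∑ t, w t = finrank 𝕜 E := by
  have key := congrArg (fun A : E →L[𝕜] E => LinearMap.trace 𝕜 E A) h.sum_smul_rankOne
  simp only [ContinuousLinearMap.toLinearMap_sum, map_sum, ContinuousLinearMap.toLinearMap_smul,
    map_smul, trace_rankOne, inner_self_eq_norm_sq_to_K, h.norm_eq_one,
    ContinuousLinearMap.toLinearMap_one, LinearMap.trace_one] at key
  rw [← RCLike.ofReal_inj (K := 𝕜)]
  simpa using key

end IsRankOnePOVM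

variable {α : Type*} {k : ℕ}

/-- A measurement adaptively chosen in `k` rounds: `y i s` and `w i s` are the vector and the weight
of the outcome `s i` of round `i`. They depend only on the outcomes `s j` with `j ≤ i`, and for
fixed outcomes of the earlier rounds they form a rank-one POVM. The coordinates of `s` after `i` are
there only so that a single sequence `s` indexes all the rounds. -/
structure IsAdaptivePOVM [Fintype α] (w : Fin k → (Fin k → α) → ℝ) (y : Fin k → (Fin k → α) → E) :
    Prop where
  weight_dependsOn : ∀ i, DependsOn (w i) (Set.Iic i)
  vector_dependsOn : ∀ i, DependsOn (y i) (Set.Iic i)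
  isRankOnePOVM : ∀ i s, IsRankOnePOVM 𝕜 (fun t => w i (Function.update s i t))
    (fun t => y i (Function.update s i t))

/-- The overlap `|⟨y^j|y^i⟩|` if round `j` is strictly earlier than round `i`, and `1` otherwise.
It is the contribution of the pair `(j, i)` to the sum over the outcomes of round `i`. -/
noncomputable def earlierOverlap (y : Fin k → (Fin k → α) → E) (j i : Fin k) (s : Fin k → α) : ℝ :=
  if j < i then ‖⟪y j s, y i s⟫_𝕜‖ else 1

lemma earlierOverlap_nonneg (y : Fin k → (Fin k → α) → E) (j i : Fin k) (s : Fin k → α) :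
    0 ≤ earlierOverlap 𝕜 y j i s := by
  unfold earlierOverlap
  positivity

namespace IsAdaptivePOVM

variable {𝕜} [Fintype α]

lemma comp_cons {w : Fin (k + 1) → (Fin (k + 1) → α) → ℝ} {y : Fin (k + 1) → (Fin (k + 1) → α) → E}
    (h : IsAdaptivePOVM 𝕜 w y) (a : α) :
    IsAdaptivePOVM 𝕜 (fun i s => w i.succ (Fin.cons a s)) (fun i s => y i.succ (Fin.cons a s)) where
  weight_dependsOn i := dependsOn_cons (h.weight_dependsOn i.succ) a
  vector_dependsOn i := dependsOn_cons (h.vector_dependsOn i.succ) a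
  isRankOnePOVM i s := by simpa only [Fin.cons_update] using h.isRankOnePOVM i.succ (Fin.cons a s)

variable {w : Fin k → (Fin k → α) → ℝ} {y : Fin k → (Fin k → α) → E}

lemma weight_nonneg (h : IsAdaptivePOVM 𝕜 w y) (i : Fin k) (s : Fin k → α) : 0 ≤ w i s := by
  simpa using (h.isRankOnePOVM i s).weight_nonneg (s i)

lemma norm_eq_one (h : IsAdaptivePOVM 𝕜 w y) (i : Fin k) (s : Fin k → α) : ‖y i s‖ = 1 := by
  simpa using (h.isRankOnePOVM i s).norm_eq_one (s i)

lemma vector_update_of_lt (h : IsAdaptivePOVM 𝕜 w y) {i j : Fin k} (hji : j < i) (s : Fin k → α)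
    (t : α) : y j (Function.update s i t) = y j s :=
  h.vector_dependsOn j fun _ hl => Function.update_of_ne (hl.trans_lt hji).ne _ _

lemma dependsOn_earlierOverlap (h : IsAdaptivePOVM 𝕜 w y) (j i : Fin k) :
    DependsOn (earlierOverlap 𝕜 y j i) (Set.Iic i) := by
  intro s s' hs
  unfold earlierOverlap
  split_ifs with hji
  · rw [h.vector_dependsOn i hs, (h.vector_dependsOn j).mono (Set.Iic_subset_Iic.mpr hji.le) hs]
  · rfl

lemma sum_weight_mul_earlierOverlap_sq [FiniteDimensional 𝕜 E] [Nontrivial E]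
    (h : IsAdaptivePOVM 𝕜 w y) (j i : Fin k) (s : Fin k → α) :
    ∑ t, w i (Function.update s i t) * earlierOverlap 𝕜 y j i (Function.update s i t) ^ 2 =
      finrank 𝕜 E * (if j < i then (√(finrank 𝕜 E))⁻¹ else 1) ^ 2 := by
  have finrank_ne_zero : (finrank 𝕜 E : ℝ) ≠ 0 := by exact_mod_cast finrank_pos.ne'
  unfold earlierOverlap
  split_ifs with hji
  · simp only [h.vector_update_of_lt hji]
    rw [(h.isRankOnePOVM i s).sum_weight_mul_norm_inner_sq, h.norm_eq_one, inv_pow,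
      Real.sq_sqrt (Nat.cast_nonneg _), mul_inv_cancel₀ finrank_ne_zero, one_pow]
  · simpa using (h.isRankOnePOVM i s).sum_weight

lemma prod_norm_inner_perm (h : IsAdaptivePOVM 𝕜 w y) (τ : Equiv.Perm (Fin k)) (s : Fin k → α) :
    ∏ i, ‖⟪y (τ i) s, y i s⟫_𝕜‖ =
      ∏ i, earlierOverlap 𝕜 y (τ i) i s * earlierOverlap 𝕜 y (τ⁻¹ i) i s :=
  prod_apply_perm_eq_prod_ite_lt τ (F := fun j i => ‖⟪y j s, y i s⟫_𝕜‖)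
    (fun _ _ => norm_inner_symm _ _)
    (fun i => by simp [inner_self_eq_norm_sq_to_K, h.norm_eq_one])

lemma sum_prod_norm_inner_perm_mul_weight_le [FiniteDimensional 𝕜 E] [Nontrivial E]
    (h : IsAdaptivePOVM 𝕜 w y) (τ : Equiv.Perm (Fin k)) :
    ∑ s, ∏ i, (‖⟪y (τ i) s, y i s⟫_𝕜‖ * w i s) ≤
      (finrank 𝕜 E : ℝ) ^ k * (√(finrank 𝕜 E))⁻¹ ^ τ.support.card := by
  set D := (finrank 𝕜 E : ℝ)
  let saving (j i : Fin k) : ℝ := if j < i then (√D)⁻¹ else 1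
  have saving_nonneg (j i) : 0 ≤ saving j i := by positivity
  calc ∑ s, ∏ i, (‖⟪y (τ i) s, y i s⟫_𝕜‖ * w i s)
      = ∑ s, ∏ i, w i s * (earlierOverlap 𝕜 y (τ i) i s * earlierOverlap 𝕜 y (τ⁻¹ i) i s) := by
        simp only [Finset.prod_mul_distrib, h.prod_norm_inner_perm, mul_comm]
    _ ≤ ∏ i, D * (saving (τ i) i * saving (τ⁻¹ i) i) := by
        refine sum_prod_le_prod_of_sum_update_le (fun i s => ?_) (fun i => ?_) (fun i => ?_)
          fun i s => ?_
        · exact mul_nonneg (h.weight_nonneg i s)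
            (mul_nonneg (earlierOverlap_nonneg ..) (earlierOverlap_nonneg ..))
        · exact mul_nonneg (Nat.cast_nonneg _) (mul_nonneg (saving_nonneg ..) (saving_nonneg ..))
        · intro s s' hs
          simp only [h.weight_dependsOn i hs, h.dependsOn_earlierOverlap _ i hs]
        -- Cauchy–Schwarz separates the two overlaps charged to round `i`.
        · refine (sum_mul_mul_le_sqrt_mul_sqrt _ (fun _ => h.weight_nonneg _ _) _ _).trans_eq ?_
          rw [h.sum_weight_mul_earlierOverlap_sq, h.sum_weight_mul_earlierOverlap_sq,
            Real.sqrt_mul (Nat.cast_nonneg _), Real.sqrt_mul (Nat.cast_nonneg _),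
            Real.sqrt_sq (saving_nonneg ..), Real.sqrt_sq (saving_nonneg ..), mul_mul_mul_comm,
            Real.mul_self_sqrt (Nat.cast_nonneg _)]
    _ = D ^ k * (√D)⁻¹ ^ τ.support.card := by
        rw [Finset.prod_mul_distrib, prod_ite_perm_lt, Finset.prod_const, Finset.card_univ,
          Fintype.card_fin]

end IsAdaptivePOVM

end POVM

section Matrices

open Module InnerProductSpace

variable {𝕜 n : Type*} [RCLike 𝕜] [Fintype n] [DecidableEq n]

lemma toEuclideanCLM_vecMulVec_star (u v : n → 𝕜) :
    toEuclideanCLM (𝕜 := 𝕜) (vecMulVec u (star v)) =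
      rankOne 𝕜 (WithLp.toLp 2 u) (WithLp.toLp 2 v) := by
  ext x i
  simp [vecMulVec_mulVec, EuclideanSpace.inner_eq_star_dotProduct, dotProduct_comm, mul_comm (u i)]

lemma isRankOnePOVM_toLp {ι : Type*} [Fintype ι] {w : ι → ℝ} {v : ι → n → 𝕜}
    (weight_nonneg : ∀ t, 0 ≤ w t) (sum_norm_sq : ∀ t, ∑ x, ‖v t x‖ ^ 2 = 1)
    (sum_smul_vecMulVec : ∑ t, (w t : 𝕜) • vecMulVec (v t) (star (v t)) = 1) :
    IsRankOnePOVM 𝕜 w (fun t => WithLp.toLp 2 (v t)) where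
  weight_nonneg := weight_nonneg
  norm_eq_one t := by simp [EuclideanSpace.norm_eq, sum_norm_sq]
  sum_smul_rankOne := by
    have key := congrArg (toEuclideanCLM (n := n) (𝕜 := 𝕜)) sum_smul_vecMulVec
    simpa only [map_sum, map_smul, map_one, toEuclideanCLM_vecMulVec_star] using key

lemma isAdaptivePOVM_toLp {α : Type*} [Fintype α] {k : ℕ} {w : Fin k → (Fin k → α) → ℝ}
    {y : Fin k → (Fin k → α) → n → 𝕜} (weight_nonneg : ∀ i s, 0 ≤ w i s)
    (sum_norm_sq : ∀ i s, ∑ x, ‖y i s x‖ ^ 2 = 1)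
    (weight_dependsOn : ∀ i, DependsOn (w i) (Set.Iic i))
    (vector_dependsOn : ∀ i, DependsOn (y i) (Set.Iic i))
    (sum_smul_vecMulVec : ∀ i s, ∑ t, (w i (Function.update s i t) : 𝕜) •
      vecMulVec (y i (Function.update s i t)) (star (y i (Function.update s i t))) = 1) :
    IsAdaptivePOVM 𝕜 w (fun i s => WithLp.toLp 2 (y i s)) where
  weight_dependsOn := weight_dependsOn
  vector_dependsOn i _ _ hs := congrArg (WithLp.toLp 2) (vector_dependsOn i hs)
  isRankOnePOVM i s := isRankOnePOVM_toLp (fun _ => weight_nonneg _ _) (fun _ => sum_norm_sq _ _)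
    (sum_smul_vecMulVec i s)

end Matrices

open Module InnerProductSpace in
theorem sum_over_permutations_bound_general {𝕜 E α : Type*} [RCLike 𝕜] [NormedAddCommGroup E]
    [InnerProductSpace 𝕜 E] [Fintype α] {k : ℕ} {w : Fin k → (Fin k → α) → ℝ}
    {y : Fin k → (Fin k → α) → E} (h : IsAdaptivePOVM 𝕜 w y) (hk : k ^ 2 < finrank 𝕜 E) :
    ((finrank 𝕜 E : ℝ) ^ k)⁻¹ * ∑ τ : Equiv.Perm (Fin k) with τ ≠ 1,
        ∑ s, ∏ i, (‖⟪y (τ i) s, y i s⟫_𝕜‖ * w i s) ≤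
      (k ^ 2 / finrank 𝕜 E) / (1 - k / √(finrank 𝕜 E)) := by
  have hkD : (k : ℝ) ^ 2 < finrank 𝕜 E := by exact_mod_cast hk
  have finrank_pos : 0 < finrank 𝕜 E := (Nat.zero_le _).trans_lt hk
  have : FiniteDimensional 𝕜 E := .of_finrank_pos finrank_pos
  have : Nontrivial E := nontrivial_of_finrank_pos finrank_pos
  set D := (finrank 𝕜 E : ℝ)
  have hD : 0 < D := Nat.cast_pos.mpr finrank_pos
  have hr_lt : k * (√D)⁻¹ < 1 := by
    rw [← div_eq_mul_inv, div_lt_one (by positivity)]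
    exact Real.lt_sqrt_of_sq_lt hkD
  calc (D ^ k)⁻¹ * ∑ τ : Equiv.Perm (Fin k) with τ ≠ 1,
        ∑ s, ∏ i, (‖⟪y (τ i) s, y i s⟫_𝕜‖ * w i s)
      ≤ (D ^ k)⁻¹ * ∑ τ : Equiv.Perm (Fin k) with τ ≠ 1, D ^ k * (√D)⁻¹ ^ τ.support.card := by
        gcongr with τ
        exact h.sum_prod_norm_inner_perm_mul_weight_le τ
    _ = ∑ τ : Equiv.Perm (Fin k) with τ ≠ 1, (√D)⁻¹ ^ τ.support.card := by
        rw [← Finset.mul_sum, inv_mul_cancel_left₀ (by positivity)]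
    _ ≤ (k * (√D)⁻¹) ^ 2 / (1 - k * (√D)⁻¹) := by
        simpa using sum_perm_ne_one_pow_card_support_le (α := Fin k) (r := (√D)⁻¹)
          (by positivity) (by simpa using hr_lt)
    _ = (k ^ 2 / D) / (1 - k / √D) := by
        rw [← div_eq_mul_inv, div_pow, Real.sq_sqrt hD.le]

lemma div_one_sub_div_sqrt_le {k D : ℝ} (hk : 0 ≤ k) (hD : 1 ≤ D) (hkD : k ^ 2 < D) :
    (k ^ 2 / D) / (1 - k / √D) ≤ (1 + k) * (k ^ 2 / D) / (1 - k ^ 2 / D) := by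
  set x := k / √D
  have hx_sq : k ^ 2 / D = x ^ 2 := by rw [div_pow, Real.sq_sqrt (by positivity)]
  have : 0 ≤ x := by positivity
  have hx_le : x ≤ k := div_le_self hk (Real.one_le_sqrt.mpr hD)
  have hx_sq_lt : x ^ 2 < 1 := by rwa [← hx_sq, div_lt_one (by positivity)]
  rw [hx_sq]
  calc x ^ 2 / (1 - x) = (1 + x) * x ^ 2 / (1 - x ^ 2) := by
        rw [← mul_div_mul_left _ _ (by positivity : 1 + x ≠ 0)]
        ring_nf
    _ ≤ (1 + k) * x ^ 2 / (1 - x ^ 2) := by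
        have : 0 ≤ 1 - x ^ 2 := by linarith
        gcongr

/-- For the adaptive measurement data `y, λ` (unit vectors and weights
satisfying the POVM completeness condition), if moreover `k² < D = 2^ℓ`, then for every
fixed `s₀`, summing the quantity of Statement 4 over all non-identity permutations `τ`:
`D^{−k} ∑_{τ ≠ id} ∑_{s₁,…,s_k} ∏_{i=1}^k |⟨y^{τ(i)}_{s₀…s_{τ(i)}} | y^i_{s₀…s_i}⟩| ·
λ^i_{s₀…s_i} ≤ (1+k)(k²/D)/(1 − k²/D)`. -/
theorem sum_over_permutations_bound
    (ℓ k Dm : ℕ) (hℓ : 1 ≤ ℓ) (hk : 1 ≤ k) (hDm : 1 ≤ Dm)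
    (y : Fin (k + 1) → (Fin (k + 1) → Fin Dm) → (Fin (2 ^ ℓ) → ℂ))
    (lam : Fin (k + 1) → (Fin (k + 1) → Fin Dm) → ℝ)
    (hy_unit : ∀ i s, ∑ x, ‖y i s x‖ ^ 2 = 1)
    (hlam : ∀ i s, 0 < lam i s ∧ lam i s ≤ 1)
    (hy_prefix : ∀ (i : Fin (k + 1)) (s s' : Fin (k + 1) → Fin Dm),
      (∀ j, j ≤ i → s j = s' j) → y i s = y i s')
    (hlam_prefix : ∀ (i : Fin (k + 1)) (s s' : Fin (k + 1) → Fin Dm),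
      (∀ j, j ≤ i → s j = s' j) → lam i s = lam i s')
    (hcomplete : ∀ (i : Fin (k + 1)) (s : Fin (k + 1) → Fin Dm),
      ∑ t : Fin Dm, (lam i (Function.update s i t) : ℂ) •
          Matrix.vecMulVec (y i (Function.update s i t)) (star (y i (Function.update s i t)))
        = (1 : Matrix (Fin (2 ^ ℓ)) (Fin (2 ^ ℓ)) ℂ))
    (hkD : k ^ 2 < 2 ^ ℓ) :
    ∀ s₀ : Fin Dm,
      (((2 : ℝ) ^ ℓ) ^ k)⁻¹ *
        ∑ τ ∈ Finset.univ.filter (fun τ : Equiv.Perm (Fin k) => τ ≠ 1),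
          ∑ s' : Fin k → Fin Dm,
            ∏ i : Fin k,
              (‖∑ x, (starRingEnd ℂ) (y (τ i).succ (Fin.cons s₀ s') x) *
                  y i.succ (Fin.cons s₀ s') x‖ * lam i.succ (Fin.cons s₀ s'))
        ≤ ((1 : ℝ) + k) * ((k : ℝ) ^ 2 / (2 : ℝ) ^ ℓ) /
            (1 - (k : ℝ) ^ 2 / (2 : ℝ) ^ ℓ) := by
  intro s₀
  have h := isAdaptivePOVM_toLp (fun i s => (hlam i s).1.le) hy_unit hlam_prefix hy_prefix hcomplete
  refine le_trans ?_ (div_one_sub_div_sqrt_le (Nat.cast_nonneg k) (one_le_pow₀ one_le_two)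
    (by exact_mod_cast hkD))
  simpa [EuclideanSpace.inner_toLp_toLp, dotProduct, mul_comm] using
    sum_over_permutations_bound_general (h.comp_cons s₀) (by simpa using hkD)
end
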